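/- arXiv:2406.00331 — 2 statements merged into one kernel-verified Lean document; each statement's English description precedes it below -/
import Mathlib

section
/- For every positive integer k one has λ_{0,k} = 1, and for every integer j ≥ 1 the recursion j·λ_{j,k} = Σ_{i=1}^{j} C(j,i) (ik - j + i) λ_{j-i,k} λ_{i,1} holds, where λ_{0,1} = 1 and λ_{i,1} = (-1)^{i-1} i γ_{i-1} for i ≥ 1, γ_j being the Stieltjes constants. -/
open scoped Real Topology
open Complex Filter MeasureTheory Finset Asymptotics

/-- The analytic extension of `s ↦ ((s-1) * ζ(s))^k` to `s = 1` (where its value is `1`). -/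
noncomputable def zetaPowAux (k : ℕ) : ℂ → ℂ :=
  Function.update (fun s : ℂ => ((s - 1) * riemannZeta s) ^ k) 1 1

/-- `lam k j` is the Taylor coefficient `λ_{j,k}`, i.e. the `j`-th derivative at `s = 1` of the
analytic extension of `(s-1)^k ζ(s)^k`; these numbers are real, and we record their real part. -/
noncomputable def lam (k j : ℕ) : ℝ :=
  (iteratedDeriv j (zetaPowAux k) 1).re

/-- The Fourier coefficients `ℓ_{n,k}` for `n ≥ -k` (an integer index). -/
noncomputable def ell (k : ℕ) (n : ℤ) : ℝ :=
  if 1 ≤ n then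
    (-1 : ℝ) ^ n.toNat *
      ∑ j ∈ Finset.Icc 1 n.toNat,
        ((n.toNat - 1).choose (j - 1) : ℝ) * lam k (j + k) / (Nat.factorial (j + k))
  else
    (-1 : ℝ) ^ k *
      ∑ j ∈ Finset.range ((k + n).toNat + 1),
        ((k - j).choose (-n).toNat : ℝ) * (-1 : ℝ) ^ j * lam k j / (Nat.factorial j)

/-- The Lindelöf Hypothesis: `ζ(1/2 + it) = O(|t|^ε)` for every `ε > 0`. -/
def LindelofHypothesis : Prop :=
  ∀ ε : ℝ, 0 < ε → ∃ C : ℝ, ∀ t : ℝ, 1 ≤ |t| →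
    ‖riemannZeta (1 / 2 + t * Complex.I)‖ ≤ C * |t| ^ ε

/-- `dk k n` is the Piltz divisor function `d_k(n)`: the number of representations of `n` as an
ordered product of `k` positive integers (the `k`-th Dirichlet-convolution power of `ζ`). -/
noncomputable def dk (k n : ℕ) : ℕ := (ArithmeticFunction.zeta ^ k) n

/-- The coefficients `a_{j,k}` of the polynomial `P_k`. -/
noncomputable def aCoef (k j : ℕ) : ℝ :=
  (-1 : ℝ) ^ (k - 1 - j) *
    ∑ i ∈ Finset.range (k - 1 - j + 1), (-1 : ℝ) ^ i * lam k i / (Nat.factorial i)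

/-- The error term `Δ_k(x) = (Σ_{1 ≤ n ≤ x} d_k(n)) - x P_k(log x)` in the Piltz divisor
problem. -/
noncomputable def Deltak (k : ℕ) (x : ℝ) : ℝ :=
  (∑ n ∈ Finset.Icc 1 ⌊x⌋₊, (dk k n : ℝ)) -
    x * ∑ j ∈ Finset.range k, aCoef k j / (Nat.factorial j) * (Real.log x) ^ j

/-- The `n`-th Laguerre polynomial. -/
noncomputable def laguerre (n : ℕ) (u : ℝ) : ℝ :=
  ∑ j ∈ Finset.range (n + 1), (n.choose j : ℝ) * (-1 : ℝ) ^ j * u ^ j / (Nat.factorial j)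

/-- The Bessel function of the first kind of order `0`. -/
noncomputable def besselJ0 (u : ℝ) : ℝ :=
  ∑' m : ℕ, (-1 : ℝ) ^ m * (u / 2) ^ (2 * m) / ((Nat.factorial m : ℝ) ^ 2)

/-- `φ_k(x) = ∫_1^∞ Δ_k(r) J₀(2 √(x log r)) r⁻² dr`. -/
noncomputable def phik (k : ℕ) (x : ℝ) : ℝ :=
  ∫ r in Set.Ioi (1 : ℝ), Deltak k r * besselJ0 (2 * Real.sqrt (x * Real.log r)) / r ^ 2

lemma zetaPowAux_eq (k : ℕ) : zetaPowAux k = riemannZeta₁ ^ k := by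
  ext s
  rcases eq_or_ne s 1 with rfl | hs
  · simp [zetaPowAux]
  · have := sub_ne_zero_of_ne hs
    simp [zetaPowAux, hs, riemannZeta_eq_inv_sub_mul hs, this]

lemma differentiable_zetaPowAux (k : ℕ) : Differentiable ℂ (zetaPowAux k) := by
  rw [zetaPowAux_eq]
  exact differentiable_riemannZeta₁.pow k

lemma zetaPowAux_conj (k : ℕ) (s : ℂ) :
    zetaPowAux k (starRingEnd ℂ s) = starRingEnd ℂ (zetaPowAux k s) := by
  rcases eq_or_ne s 1 with rfl | hs
  · simp [zetaPowAux]
  · have hs' : starRingEnd ℂ s ≠ 1 := fun h ↦ hs (by simpa using congrArg (starRingEnd ℂ) h)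
    simp [zetaPowAux, hs, hs', riemannZeta_conj]

/-- Iterated derivatives preserve symmetry under complex conjugation. -/
lemma iteratedDeriv_conj_of_conj {f : ℂ → ℂ}
    (hf : ∀ s, f (starRingEnd ℂ s) = starRingEnd ℂ (f s)) (n : ℕ) (s : ℂ) :
    iteratedDeriv n f (starRingEnd ℂ s) = starRingEnd ℂ (iteratedDeriv n f s) := by
  induction n generalizing s with
  | zero => simpa using hf s
  | succ n ih =>
    have h : starRingEnd ℂ ∘ iteratedDeriv n f ∘ starRingEnd ℂ = iteratedDeriv n f := by
      ext z
      simp [ih]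
    rw [iteratedDeriv_succ]
    conv_lhs => rw [← h]
    simp [deriv_conj_conj]

lemma ofReal_lam (k j : ℕ) : (lam k j : ℂ) = iteratedDeriv j (zetaPowAux k) 1 := by
  have h := iteratedDeriv_conj_of_conj (zetaPowAux_conj k) j 1
  rw [map_one] at h
  exact Complex.conj_eq_iff_re.mp h.symm

lemma zetaPowAux_one_mul_deriv (k : ℕ) :
    zetaPowAux 1 * deriv (zetaPowAux k) = (k : ℂ) • (deriv (zetaPowAux 1) * zetaPowAux k) := by
  ext s
  have hd := differentiable_riemannZeta₁ s
  cases k with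
  | zero => simp [zetaPowAux_eq]
  | succ k =>
    simp only [zetaPowAux_eq, pow_one, Pi.mul_apply, Pi.smul_apply, smul_eq_mul, deriv_pow hd,
      Pi.pow_apply, Nat.add_sub_cancel]
    ring

/-- The Leibniz expansion of `zetaPowAux_one_mul_deriv` at `s = 1`. -/
lemma sum_choose_mul_lam (k n : ℕ) :
    ∑ i ∈ range (n + 1), (n.choose i : ℝ) * lam 1 i * lam k (n - i + 1) =
      k * ∑ i ∈ range (n + 1), (n.choose i : ℝ) * lam 1 (i + 1) * lam k (n - i) := by
  have hc (m : ℕ) : ContDiffAt ℂ n (zetaPowAux m) 1 :=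
    (differentiable_zetaPowAux m).contDiff.contDiffAt
  have hc' (m : ℕ) : ContDiffAt ℂ n (deriv (zetaPowAux m)) 1 :=
    (differentiable_zetaPowAux m).deriv.contDiff.contDiffAt
  have h := congrArg (fun f ↦ iteratedDeriv n f 1) (zetaPowAux_one_mul_deriv k)
  simp only [iteratedDeriv_const_smul_field, iteratedDeriv_mul (hc 1) (hc' k),
    iteratedDeriv_mul (hc' 1) (hc k), ← iteratedDeriv_succ', ← ofReal_lam, smul_eq_mul] at h
  exact_mod_cast h

/-- The logarithmic-derivative convolution identity, solved for the top coefficient. -/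
lemma succ_mul_eq_sum_of_convolution {R : Type*} [CommRing R] {a b : ℕ → R} {c : R} {n : ℕ}
    (ha : a 0 = 1)
    (h : ∑ i ∈ range (n + 1), (n.choose i : R) * a i * b (n - i + 1) =
      c * ∑ i ∈ range (n + 1), (n.choose i : R) * a (i + 1) * b (n - i)) :
    ((n + 1 : ℕ) : R) * b (n + 1) = ∑ i ∈ Icc 1 (n + 1),
      ((n + 1).choose i : R) * (i * c - (n + 1 : ℕ) + i) * b (n + 1 - i) * a i := by
  have h₁ : ∑ i ∈ range (n + 2), ((n + 1).choose i : R) * (i * c) * b (n + 1 - i) * a i =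
      (n + 1 : ℕ) * (c * ∑ i ∈ range (n + 1), (n.choose i : R) * a (i + 1) * b (n - i)) := by
    rw [sum_range_succ', mul_sum, mul_sum]
    simp only [Nat.cast_zero, zero_mul, mul_zero, add_zero]
    refine sum_congr rfl fun i _ ↦ ?_
    have e := congrArg (Nat.cast (R := R)) (Nat.add_one_mul_choose_eq n i)
    rw [Nat.cast_mul, Nat.cast_mul] at e
    rw [Nat.add_sub_add_right]
    linear_combination (-c * a (i + 1) * b (n - i)) * e
  have h₂ : ∑ i ∈ range (n + 2),
      ((n + 1).choose i : R) * ((n + 1 : ℕ) - i) * b (n + 1 - i) * a i =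
      (n + 1 : ℕ) * ∑ i ∈ range (n + 1), (n.choose i : R) * a i * b (n - i + 1) := by
    rw [sum_range_succ, mul_sum]
    simp only [sub_self, zero_mul, mul_zero, add_zero]
    refine sum_congr rfl fun i hi ↦ ?_
    have hi' : i ≤ n := Nat.lt_succ_iff.mp (mem_range.mp hi)
    have e := congrArg (Nat.cast (R := R)) (Nat.choose_mul_succ_eq n i)
    rw [Nat.cast_mul, Nat.cast_mul, Nat.cast_sub (by lia)] at e
    rw [Nat.sub_add_comm hi']
    linear_combination (-a i * b (n - i + 1)) * e
  have h₃ : ∑ i ∈ range (n + 2),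
      ((n + 1).choose i : R) * (i * c - (n + 1 : ℕ) + i) * b (n + 1 - i) * a i = 0 := by
    rw [h, ← h₁, ← sub_eq_zero, ← sum_sub_distrib] at h₂
    rw [← neg_eq_zero, ← sum_neg_distrib, ← h₂]
    exact sum_congr rfl fun i _ ↦ by ring
  rw [range_eq_Ico, sum_eq_sum_Ico_succ_bot (by lia)] at h₃
  simp only [Nat.choose_zero_right, Nat.cast_one, Nat.cast_zero, ha, Nat.sub_zero] at h₃
  rw [← Ico_add_one_right_eq_Icc]
  linear_combination -h₃

theorem stmt7 (k : ℕ) (hk : 0 < k) :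
    lam k 0 = 1 ∧ ∀ j : ℕ, 1 ≤ j →
      (j : ℝ) * lam k j = ∑ i ∈ Finset.Icc 1 j,
        (j.choose i : ℝ) * ((i : ℝ) * k - j + i) * lam k (j - i) * lam 1 i := by
  have h₀ (m : ℕ) : lam m 0 = 1 := by simp [lam, zetaPowAux]
  refine ⟨h₀ k, fun j hj ↦ ?_⟩
  obtain ⟨n, rfl⟩ := Nat.exists_eq_add_of_le' hj
  exact succ_mul_eq_sum_of_convolution (h₀ 1) (sum_choose_mul_lam k n)
end

section
/- If ℓ_{n,1} = O(n^{-1+ε}) as n → ∞ for every ε > 0, then the Lindelöf Hypothesis holds. -/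
open scoped Real Topology
open Complex Filter MeasureTheory Finset Asymptotics

lemma zetaPowAux_one : zetaPowAux 1 = riemannZeta₁ := by
  ext s
  by_cases hs : s = 1
  · simp [zetaPowAux, hs]
  · have := sub_ne_zero.mpr hs
    simp [zetaPowAux, hs, riemannZeta_eq_inv_sub_mul hs, this]

lemma riemannZeta₁_conj (s : ℂ) :
    riemannZeta₁ (starRingEnd ℂ s) = starRingEnd ℂ (riemannZeta₁ s) := by
  by_cases hs : s = 1
  · simp [hs]
  · have hs' : starRingEnd ℂ s ≠ 1 := fun h => hs (by simpa using congrArg (starRingEnd ℂ) h)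
    simp [riemannZeta₁, riemannZeta₀, hs, hs', riemannZeta_conj]

lemma ofReal_lam_one (j : ℕ) : ((lam 1 j : ℝ) : ℂ) = iteratedDeriv j riemannZeta₁ 1 := by
  rw [lam, zetaPowAux_one]
  refine Complex.conj_eq_iff_re.mp ?_
  simpa using (iteratedDeriv_conj_of_conj riemannZeta₁_conj j 1).symm

/-- The Taylor coefficients at `1` of the entire function `ζ(s) - 1/(s-1)`. -/
noncomputable def zetaCoeff (k : ℕ) : ℝ := lam 1 (k + 1) / (Nat.factorial (k + 1))

lemma hasSum_zetaCoeff {s : ℂ} (hs : s ≠ 1) :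
    HasSum (fun k => (zetaCoeff k : ℂ) * (s - 1) ^ k) (riemannZeta₀ s) := by
  have hs' := sub_ne_zero.mpr hs
  have h := Complex.hasSum_taylorSeries_of_entire differentiable_riemannZeta₁ 1 s
  rw [← hasSum_nat_add_iff' 1] at h
  have h' := h.mul_right (s - 1)⁻¹
  convert! h' using 1
  · ext k
    simp only [zetaCoeff, ofReal_div, ofReal_lam_one, ofReal_natCast, smul_eq_mul, pow_succ]
    field_simp
  · simp [riemannZeta₁]
    field_simp

lemma summable_norm_zetaCoeff (R : ℝ) :
    Summable (fun k => ‖(zetaCoeff k : ℂ)‖ * |R| ^ k) := by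
  by_cases hR : R = 0
  · subst hR
    refine summable_of_ne_finset_zero (s := {0}) fun k hk => ?_
    simp at hk
    simp [hk]
  · have := (hasSum_zetaCoeff (s := 1 + R) (by simpa using hR)).summable.norm
    simpa using this

lemma summable_mul_choose_mul_pow {a : ℕ → ℂ}
    (ha : ∀ R : ℝ, Summable (fun k => ‖a k‖ * |R| ^ k)) {x : ℂ} (hx : ‖x‖ < 1) :
    Summable (fun p : ℕ × ℕ => a p.1 * ((p.2 + p.1).choose p.1) * x ^ (p.2 + p.1)) := by
  apply Summable.of_norm
  have hin (k : ℕ) : HasSum (fun m : ℕ => ‖a k * ((m + k).choose k) * x ^ (m + k)‖)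
      (‖a k‖ * ‖x‖ ^ k * (1 / (1 - ‖x‖) ^ (k + 1))) := by
    have := (hasSum_choose_mul_geometric_of_norm_lt_one (𝕜 := ℝ) k
      (r := ‖x‖) (by simpa using hx)).mul_left (‖a k‖ * ‖x‖ ^ k)
    convert! this using 1
    ext m
    simp [pow_add]
    ring
  rw [summable_prod_of_nonneg (fun p => norm_nonneg _)]
  refine ⟨fun k => (hin k).summable, ?_⟩
  simp only [(hin _).tsum_eq]
  have hx' : 0 < 1 - ‖x‖ := by linarith
  convert! (ha (‖x‖ / (1 - ‖x‖))).mul_right (1 / (1 - ‖x‖)) using 2 with k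
  rw [abs_of_nonneg (by positivity), div_pow, pow_succ]
  field_simp

/-- Substituting `x / (1 - x)` into an everywhere convergent power series. -/
lemma hasSum_sum_choose_mul_pow {a : ℕ → ℂ}
    (ha : ∀ R : ℝ, Summable (fun k => ‖a k‖ * |R| ^ k)) {x b : ℂ} (hx : ‖x‖ < 1)
    (hb : HasSum (fun k => a k * (x / (1 - x)) ^ k) b) :
    HasSum (fun n : ℕ => (∑ k ∈ range (n + 1), (n.choose k : ℂ) * a k) * x ^ n)
      (b / (1 - x)) := by
  have hx1 : 1 - x ≠ 0 := by
    intro h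
    rw [← sub_eq_zero.mp h] at hx
    simp at hx
  have hS := summable_mul_choose_mul_pow ha hx
  have hin (k : ℕ) : HasSum (fun m : ℕ => a k * ((m + k).choose k) * x ^ (m + k))
      (a k * (x / (1 - x)) ^ k * (1 / (1 - x))) := by
    have := (hasSum_choose_mul_geometric_of_norm_lt_one k hx).mul_left (a k * x ^ k)
    convert! this using 1
    · ext m
      rw [pow_add]
      ring
    · rw [div_pow, pow_succ]
      field_simp
  have hval := hS.hasSum.prod_fiberwise hin
  have h1 := hval.unique (hb.mul_right (1 / (1 - x)))
  have hH := hS.hasSum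
  rw [h1, ← Finset.HasAntidiagonal.sigmaAntidiagonalEquivProd.hasSum_iff] at hH
  have := hH.sigma (fun n => hasSum_fintype _)
  convert! this using 1
  · ext n
    simp only [Function.comp, Finset.HasAntidiagonal.sigmaAntidiagonalEquivProd_apply]
    rw [Finset.sum_coe_sort (antidiagonal n) (fun p : ℕ × ℕ => a p.1 * ((p.2 + p.1).choose p.1) *
      x ^ (p.2 + p.1)), Finset.Nat.sum_antidiagonal_eq_sum_range_succ_mk,
      Finset.sum_mul]
    refine Finset.sum_congr rfl fun k hk => ?_
    have : n - k + k = n := Nat.sub_add_cancel (by simpa [Nat.lt_succ_iff] using hk)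
    simp only [this]
    ring
  · ring

lemma ell_one_succ (n : ℕ) :
    ell 1 ((n + 1 : ℕ) : ℤ) =
      (-1) ^ (n + 1) * ∑ k ∈ range (n + 1), (n.choose k : ℝ) * zetaCoeff (k + 1) := by
  rw [ell, if_pos (by push_cast; omega), Int.toNat_natCast, Finset.range_eq_Ico,
    ← Finset.Ico_add_one_right_eq_Icc]
  congr 1
  rw [← Finset.sum_Ico_add' _ 0 (n + 1) 1]
  simp [zetaCoeff, mul_div_assoc]

lemma hasSum_ell_one {s : ℂ} (hs : ‖(1 - s) / s‖ < 1) (hs0 : s ≠ 0) (hs1 : s ≠ 1) :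
    HasSum (fun n : ℕ => (ell 1 ((n + 1 : ℕ) : ℤ) : ℂ) * ((1 - s) / s) ^ (n + 1))
      (riemannZeta₀ s - zetaCoeff 0) := by
  have hs1' := sub_ne_zero.mpr hs1
  have hx : ‖(s - 1) / s‖ < 1 := by rwa [norm_div, norm_sub_rev, ← norm_div]
  have hw : (s - 1) / s / (1 - (s - 1) / s) = s - 1 := by
    field_simp
    ring
  have hx1 : 1 - (s - 1) / s = s⁻¹ := by
    field_simp
    ring
  have ha (R : ℝ) : Summable (fun k => ‖(zetaCoeff (k + 1) : ℂ)‖ * |R| ^ k) := by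
    by_cases hR : R = 0
    · subst hR
      refine summable_of_ne_finset_zero (s := {0}) fun k hk => ?_
      simp at hk
      simp [hk]
    · refine (((summable_nat_add_iff 1).mpr (summable_norm_zetaCoeff R)).mul_right |R|⁻¹).congr
        fun k => ?_
      rw [pow_succ]
      field_simp
  have hb : HasSum (fun k => (zetaCoeff (k + 1) : ℂ) * ((s - 1) / s / (1 - (s - 1) / s)) ^ k)
      ((riemannZeta₀ s - zetaCoeff 0) / (s - 1)) := by
    rw [hw]
    have h := (hasSum_nat_add_iff' 1).mpr (hasSum_zetaCoeff hs1)
    convert! h.div_const (s - 1) using 1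
    · ext k
      rw [pow_succ]
      field_simp
    · simp
  convert! (hasSum_sum_choose_mul_pow ha hx hb).mul_right ((s - 1) / s) using 1
  · ext n
    rw [ell_one_succ, show (1 - s) / s = -1 * ((s - 1) / s) by ring, mul_pow]
    push_cast
    rw [mul_mul_mul_comm, ← mul_pow]
    simp [pow_succ, mul_assoc]
  · rw [hx1]
    field_simp

/-- The Mellin kernel giving the analytic continuation of `ζ` to the right half-plane. -/
noncomputable def fractTail (t : ℝ) : ℂ :=
  Set.indicator (Set.Ioi 1) (fun t : ℝ => ((Int.fract t : ℝ) : ℂ)) t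

lemma norm_fractTail_le (t : ℝ) : ‖fractTail t‖ ≤ 1 := by
  unfold fractTail Set.indicator
  split_ifs
  · simpa [abs_of_nonneg (Int.fract_nonneg t)] using (Int.fract_lt_one t).le
  · simp

lemma measurable_fractTail : Measurable fractTail :=
  (Complex.measurable_ofReal.comp measurable_fract).indicator measurableSet_Ioi

lemma fractTail_isBigO_atTop : fractTail =O[atTop] (fun t : ℝ => t ^ (-(0 : ℝ))) :=
  IsBigO.of_bound 1 (Eventually.of_forall fun t => by simpa using norm_fractTail_le t)

lemma fractTail_isBigO_zero (b : ℝ) : fractTail =O[𝓝[>] 0] (fun t : ℝ => t ^ (-b)) := by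
  refine IsBigO.of_bound 1 ?_
  filter_upwards [nhdsWithin_le_nhds (Iio_mem_nhds (show (0 : ℝ) < 1 by norm_num))] with t ht
  have : t ∉ Set.Ioi (1 : ℝ) := by simpa using (le_of_lt ht)
  simp [fractTail, this]

lemma locallyIntegrable_fractTail : LocallyIntegrable fractTail :=
  (locallyIntegrable_const (1 : ℝ)).mono measurable_fractTail.aestronglyMeasurable
    (Eventually.of_forall fun t => by simpa using norm_fractTail_le t)

lemma differentiableAt_mellin_fractTail {s : ℂ} (hs : 0 < s.re) :
    DifferentiableAt ℂ (fun s => mellin fractTail (-s)) s := by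
  have h := mellin_differentiableAt_of_isBigO_rpow (s := -s)
    (locallyIntegrable_fractTail.locallyIntegrableOn _) fractTail_isBigO_atTop
    (by simpa using hs) (fractTail_isBigO_zero (-s.re - 1)) (by simp)
  exact h.comp s differentiable_neg.differentiableAt

lemma mellin_fractTail_eq (s : ℂ) :
    mellin fractTail (-s) = ∫ t in Set.Ioi (1 : ℝ), ((Int.fract t : ℝ) : ℂ) * (t : ℂ) ^ (-(s + 1)) := by
  have h1 : Set.Ioi (1 : ℝ) ⊆ Set.Ioi 0 := Set.Ioi_subset_Ioi zero_le_one
  have h2 : ∀ t : ℝ, (t : ℂ) ^ (-s - 1) • fractTail t =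
      Set.indicator (Set.Ioi 1) (fun t : ℝ => ((Int.fract t : ℝ) : ℂ) * (t : ℂ) ^ (-(s + 1))) t := by
    intro t
    by_cases ht : t ∈ Set.Ioi (1 : ℝ)
    · simp only [fractTail, Set.indicator_of_mem ht, smul_eq_mul, neg_add']
      ring
    · simp [fractTail, Set.indicator_of_notMem ht]
  rw [mellin]
  simp_rw [h2]
  rw [setIntegral_indicator measurableSet_Ioi, Set.inter_eq_right.mpr h1]

lemma integrableOn_fract_mul_cpow {s : ℂ} (hs : 0 < s.re) :
    IntegrableOn (fun t : ℝ => ((Int.fract t : ℝ) : ℂ) * (t : ℂ) ^ (-(s + 1))) (Set.Ioi 1) := by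
  refine (integrableOn_Ioi_cpow_of_lt (a := -(s + 1)) (by simpa using hs) zero_lt_one).bdd_mul
    (c := 1) (Complex.measurable_ofReal.comp measurable_fract).aestronglyMeasurable ?_
  exact Eventually.of_forall fun t => by
    simpa [abs_of_nonneg (Int.fract_nonneg t)] using (Int.fract_lt_one t).le

lemma norm_mellin_fractTail_le {s : ℂ} (hs : 0 < s.re) :
    ‖mellin fractTail (-s)‖ ≤ 1 / s.re := by
  rw [mellin_fractTail_eq]
  have h_integral : ∫ t in Set.Ioi (1 : ℝ), t ^ (-(s.re + 1)) = 1 / s.re := by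
    rw [integral_Ioi_rpow_of_lt (by linarith) zero_lt_one]
    simp
  rw [← h_integral]
  refine norm_integral_le_of_norm_le
    (integrableOn_Ioi_rpow_of_lt (by linarith) zero_lt_one) ?_
  filter_upwards [ae_restrict_mem measurableSet_Ioi] with t ht
  have ht0 : 0 < t := zero_lt_one.trans ht
  rw [norm_mul, Complex.norm_cpow_eq_rpow_re_of_pos ht0]
  have h1 : ‖((Int.fract t : ℝ) : ℂ)‖ ≤ 1 := by
    simpa [abs_of_nonneg (Int.fract_nonneg t)] using (Int.fract_lt_one t).le
  have h2 : (-(s + 1)).re = -(s.re + 1) := by simp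
  rw [h2]
  exact mul_le_of_le_one_left (Real.rpow_nonneg ht0.le _) h1

lemma riemannZeta_eq_of_one_lt_re {s : ℂ} (hs : 1 < s.re) :
    riemannZeta s = s / (s - 1) - s * mellin fractTail (-s) := by
  have hs1 : s - 1 ≠ 0 := fun h => by
    rw [sub_eq_zero.mp h] at hs
    simp at hs
  have h := LSeries_eq_mul_integral_of_nonneg (fun _ => 1) (r := 1) zero_le_one hs
    (by simpa using isBigO_refl _ _) (fun _ => zero_le_one)
  have hz : LSeries (fun _ => ((1 : ℝ) : ℂ)) s = riemannZeta s := by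
    simpa using! LSeries_one_eq_riemannZeta hs
  rw [hz] at h
  have hi : IntegrableOn (fun t : ℝ => (t : ℂ) ^ (-s)) (Set.Ioi 1) :=
    integrableOn_Ioi_cpow_of_lt (by simpa using hs) zero_lt_one
  have hv : ∫ t in Set.Ioi (1 : ℝ), (t : ℂ) ^ (-s) = 1 / (s - 1) := by
    rw [integral_Ioi_cpow_of_lt (by simpa using hs) zero_lt_one]
    have : -s + 1 ≠ 0 := fun h => hs1 (by linear_combination -h)
    simp only [ofReal_one, one_cpow]
    field_simp
    ring
  rw [h, mellin_fractTail_eq, show s / (s - 1) = s * (1 / (s - 1)) by ring, ← mul_sub, ← hv,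
    ← integral_sub hi (integrableOn_fract_mul_cpow (by linarith))]
  congr 1
  refine setIntegral_congr_fun measurableSet_Ioi fun t ht => ?_
  have ht0 : (0 : ℝ) < t := zero_lt_one.trans ht
  have ht0' : (t : ℂ) ≠ 0 := ofReal_ne_zero.mpr ht0.ne'
  have hf : ((⌊t⌋₊ : ℕ) : ℂ) = (t : ℂ) - ((Int.fract t : ℝ) : ℂ) := by
    rw [← ofReal_sub, Int.self_sub_fract, ← natCast_floor_eq_intCast_floor ht0.le]
    simp
  have hp : (t : ℂ) ^ (-s) = t * (t : ℂ) ^ (-(s + 1)) := by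
    rw [show -s = 1 + -(s + 1) by ring, cpow_add _ _ ht0', cpow_one]
  simp only [ofReal_one, sum_const, Nat.card_Icc, add_tsub_cancel_right, nsmul_eq_mul, mul_one]
  rw [hf, hp]
  ring

lemma riemannZeta_eq_of_re_pos {s : ℂ} (hs : 0 < s.re) (hs1 : s ≠ 1) :
    riemannZeta s = s / (s - 1) - s * mellin fractTail (-s) := by
  have hU : IsOpen {s : ℂ | 0 < s.re} := isOpen_lt continuous_const Complex.continuous_re
  have hf : AnalyticOnNhd ℂ riemannZeta₁ {s : ℂ | 0 < s.re} :=
    (differentiable_riemannZeta₁.differentiableOn).analyticOnNhd hU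
  have hg : AnalyticOnNhd ℂ (fun s => s - (s - 1) * (s * mellin fractTail (-s)))
      {s : ℂ | 0 < s.re} := by
    refine DifferentiableOn.analyticOnNhd (fun z hz => ?_) hU
    have := differentiableAt_mellin_fractTail hz
    exact (differentiableAt_id.sub ((differentiableAt_id.sub_const 1).mul
      (differentiableAt_id.mul this))).differentiableWithinAt
  have hc : IsPreconnected {s : ℂ | 0 < s.re} :=
    (convex_halfSpace_re_gt 0).isPreconnected
  have heq := hf.eqOn_of_preconnected_of_eventuallyEq hg hc (z₀ := 2) (by simp) (by
    filter_upwards [(isOpen_lt continuous_const Complex.continuous_re).mem_nhds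
      (show (1 : ℝ) < (2 : ℂ).re by simp)] with z hz
    have hz' : z ≠ 1 := fun h => by
      rw [h] at hz
      simp at hz
    have h := riemannZeta_eq_of_one_lt_re hz
    have hz1 := sub_ne_zero.mpr hz'
    rw [riemannZeta_eq_inv_sub_mul hz'] at h
    field_simp at h
    linear_combination h) hs
  have hs1' := sub_ne_zero.mpr hs1
  rw [riemannZeta_eq_inv_sub_mul hs1, heq]
  field_simp

lemma norm_riemannZeta_le {s : ℂ} (hs : 0 < s.re) (hs1 : s ≠ 1) :
    ‖riemannZeta s‖ ≤ ‖s‖ / ‖s - 1‖ + ‖s‖ / s.re := by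
  rw [riemannZeta_eq_of_re_pos hs hs1]
  refine (norm_sub_le _ _).trans ?_
  rw [norm_div, norm_mul, div_eq_mul_one_div ‖s‖ s.re]
  gcongr
  exact norm_mellin_fractTail_le hs

lemma norm_deriv_riemannZeta_le {s : ℂ} (hs : s.re ∈ Set.Icc (1 / 2 : ℝ) 1) (ht : 1 ≤ |s.im|) :
    ‖deriv riemannZeta s‖ ≤ 64 * |s.im| := by
  have key : ∀ z ∈ Metric.closedBall s (1 / 4), 1 / 4 ≤ z.re ∧ 3 / 4 ≤ |z.im| ∧
      ‖z‖ ≤ 3 * |s.im| := by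
    intro z hz
    rw [Metric.mem_closedBall, dist_eq_norm] at hz
    have h1 := (abs_re_le_norm (z - s)).trans hz
    have h2 := (abs_im_le_norm (z - s)).trans hz
    rw [sub_re] at h1
    rw [sub_im] at h2
    have h3 := norm_le_norm_add_norm_sub' z s
    have h4 := Complex.norm_le_abs_re_add_abs_im s
    rw [abs_of_nonneg (by linarith [hs.1] : 0 ≤ s.re)] at h4
    have h5 := abs_sub_abs_le_abs_sub s.im z.im
    rw [abs_sub_comm] at h5
    refine ⟨by linarith [(abs_le.mp h1).1, hs.1], by linarith, by linarith [hs.2]⟩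
  have hne : ∀ z ∈ Metric.closedBall s (1 / 4), z ≠ 1 := by
    intro z hz h
    have := (key z hz).2.1
    norm_num [h] at this
  have hd : DiffContOnCl ℂ riemannZeta (Metric.ball s (1 / 4)) := by
    refine DifferentiableOn.diffContOnCl fun z hz => ?_
    rw [closure_ball _ (by norm_num)] at hz
    exact (differentiableAt_riemannZeta (hne z hz)).differentiableWithinAt
  have := Complex.norm_deriv_le_of_forall_mem_sphere_norm_le (C := 16 * |s.im|)
    (by norm_num : (0 : ℝ) < 1 / 4) hd fun z hz => by
      have hz' := Metric.sphere_subset_closedBall hz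
      obtain ⟨h1, h2, h3⟩ := key z hz'
      have h4 : 3 / 4 ≤ ‖z - 1‖ := by
        have := abs_im_le_norm (z - 1)
        simp only [sub_im, one_im, sub_zero] at this
        linarith
      calc ‖riemannZeta z‖ ≤ ‖z‖ / ‖z - 1‖ + ‖z‖ / z.re :=
            norm_riemannZeta_le (by linarith) (hne z hz')
        _ ≤ 3 * |s.im| / (3 / 4) + 3 * |s.im| / (1 / 4) := by gcongr
        _ = 16 * |s.im| := by ring
  linarith

lemma norm_riemannZeta_sub_le {t δ : ℝ} (ht : 1 ≤ |t|) (hδ : δ ∈ Set.Icc (0 : ℝ) (1 / 2)) :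
    ‖riemannZeta (1 / 2 + t * I) - riemannZeta (1 / 2 + δ + t * I)‖ ≤ 64 * |t| * δ := by
  let S : Set ℂ := {z | z.re ∈ Set.Icc (1 / 2 : ℝ) 1} ∩ {z | z.im = t}
  have hS : Convex ℝ S :=
    ((convex_Icc (1 / 2 : ℝ) 1).linear_preimage Complex.reLm).inter
      ((convex_singleton t).linear_preimage Complex.imLm)
  have h := hS.norm_image_sub_le_of_norm_deriv_le (f := riemannZeta) (C := 64 * |t|)
    (x := 1 / 2 + δ + t * I) (y := 1 / 2 + t * I)
    (fun z hz => differentiableAt_riemannZeta fun h => by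
      have h2 : z.im = t := hz.2
      rw [h, one_im] at h2
      norm_num [← h2] at ht)
    (fun z hz => by
      have h2 : z.im = t := hz.2
      rw [← h2] at ht ⊢
      exact norm_deriv_riemannZeta_le hz.1 ht)
    ⟨⟨by simpa using hδ.1, by norm_num; linarith [hδ.2]⟩, by simp⟩
    ⟨⟨by simp, by norm_num⟩, by simp⟩
  refine h.trans_eq ?_
  rw [show (1 / 2 + t * I - (1 / 2 + δ + t * I) : ℂ) = -(δ : ℂ) by ring, norm_neg, norm_real,
    Real.norm_of_nonneg hδ.1]

lemma rpow_mul_pow_le {e r : ℝ} (he : 0 < e) (he' : e ≤ 1 / 2) (hr0 : 0 ≤ r) (hr : r < 1) {n : ℕ}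
    (hn : 1 ≤ n) :
    (n : ℝ) ^ (-1 + e) * r ^ n ≤ (n : ℝ) ^ (-1 - e) * (1 - r) ^ (-(2 * e)) := by
  have hy : 0 < 1 - r := by linarith
  have hn0 : (0 : ℝ) < n := by exact_mod_cast hn
  have hu : 0 ≤ (n : ℝ) * (1 - r) := by positivity
  have h1 : ((n : ℝ) * (1 - r)) ^ (2 * e) ≤ Real.exp (n * (1 - r)) :=
    calc ((n : ℝ) * (1 - r)) ^ (2 * e) ≤ (n * (1 - r) + 1) ^ (2 * e) := by gcongr; linarith
      _ ≤ (n * (1 - r) + 1) ^ (1 : ℝ) :=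
        Real.rpow_le_rpow_of_exponent_le (by linarith) (by linarith)
      _ ≤ Real.exp (n * (1 - r)) := by
        rw [Real.rpow_one]
        exact Real.add_one_le_exp _
  have h2 : r ^ n ≤ Real.exp (-(n * (1 - r))) := by
    rw [← mul_neg, Real.exp_nat_mul]
    gcongr
    linarith [Real.add_one_le_exp (-(1 - r))]
  have h3 : ((n : ℝ) * (1 - r)) ^ (2 * e) * r ^ n ≤ 1 := by
    calc _ ≤ Real.exp (n * (1 - r)) * Real.exp (-(n * (1 - r))) := by gcongr
      _ = 1 := by rw [← Real.exp_add]; simp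
  rw [Real.mul_rpow hn0.le hy.le] at h3
  rw [Real.rpow_neg hy.le, ← div_eq_mul_inv, le_div_iff₀ (by positivity),
    show -1 + e = (-1 - e) + 2 * e by ring, Real.rpow_add hn0]
  calc _ = (n : ℝ) ^ (-1 - e) * ((n : ℝ) ^ (2 * e) * (1 - r) ^ (2 * e) * r ^ n) := by ring
    _ ≤ (n : ℝ) ^ (-1 - e) * 1 := by gcongr
    _ = _ := mul_one _

lemma norm_one_sub_div_le {s : ℂ} {δ : ℝ} (hδ : 0 < δ) (hs : s.re = 1 / 2 + δ) :
    ‖(1 - s) / s‖ ≤ 1 - δ / ‖s‖ ^ 2 := by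
  have hsq : ‖s‖ ^ 2 = s.re ^ 2 + s.im ^ 2 := by
    rw [← Complex.normSq_eq_norm_sq, Complex.normSq_apply]
    ring
  have hsq' : ‖1 - s‖ ^ 2 = ‖s‖ ^ 2 - 2 * δ := by
    rw [hsq, ← Complex.normSq_eq_norm_sq, Complex.normSq_apply]
    simp only [sub_re, one_re, sub_im, one_im, hs]
    ring
  have hpos : 2 * δ ≤ ‖s‖ ^ 2 := by
    rw [hsq, hs]
    nlinarith [sq_nonneg (1 / 2 - δ), sq_nonneg s.im]
  have hs0 : 0 < ‖s‖ ^ 2 := by linarith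
  have h0 : 0 ≤ 1 - δ / ‖s‖ ^ 2 := by
    rw [sub_nonneg, div_le_one hs0]
    linarith
  refine abs_le_of_sq_le_sq' ?_ h0 |>.2
  rw [norm_div, div_pow, hsq', sub_div, div_self hs0.ne', mul_div_assoc]
  nlinarith [sq_nonneg (δ / ‖s‖ ^ 2)]

lemma norm_riemannZeta₀_sub_le {C e : ℝ} (he : 0 < e) (he' : e ≤ 1 / 2)
    (h : ∀ n : ℕ, 1 ≤ n → |ell 1 n| ≤ C * (n : ℝ) ^ (-1 + e)) {s : ℂ}
    (hs : ‖(1 - s) / s‖ < 1) (hs0 : s ≠ 0) (hs1 : s ≠ 1) :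
    ‖riemannZeta₀ s - zetaCoeff 0‖ ≤
      C * (∑' n : ℕ, ((n + 1 : ℕ) : ℝ) ^ (-1 - e)) * (1 - ‖(1 - s) / s‖) ^ (-(2 * e)) := by
  have hC : 0 ≤ C := by simpa using (abs_nonneg _).trans (h 1 le_rfl)
  have hsum : Summable (fun n : ℕ => ((n + 1 : ℕ) : ℝ) ^ (-1 - e)) :=
    (summable_nat_add_iff 1).mpr (Real.summable_nat_rpow.mpr (by linarith))
  have hsum' := (hsum.hasSum.mul_left C).mul_right ((1 - ‖(1 - s) / s‖) ^ (-(2 * e)))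
  rw [← (hasSum_ell_one hs hs0 hs1).tsum_eq]
  refine tsum_of_norm_bounded hsum' fun n => ?_
  rw [norm_mul, norm_pow, norm_real, Real.norm_eq_abs]
  calc _ ≤ C * ((n + 1 : ℕ) : ℝ) ^ (-1 + e) * ‖(1 - s) / s‖ ^ (n + 1) := by
        gcongr
        exact h (n + 1) (by omega)
    _ = C * (((n + 1 : ℕ) : ℝ) ^ (-1 + e) * ‖(1 - s) / s‖ ^ (n + 1)) := by ring
    _ ≤ C * (((n + 1 : ℕ) : ℝ) ^ (-1 - e) * (1 - ‖(1 - s) / s‖) ^ (-(2 * e))) :=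
        mul_le_mul_of_nonneg_left
          (rpow_mul_pow_le he he' (norm_nonneg _) hs (Nat.succ_pos n)) hC
    _ = _ := by ring

theorem stmt9
    (h : ∀ ε : ℝ, 0 < ε → ∃ C : ℝ, ∀ n : ℕ, 1 ≤ n → |ell 1 n| ≤ C * (n : ℝ) ^ (-1 + ε)) :
    LindelofHypothesis := by
  intro ε hε
  set e := min (ε / 6) (1 / 2)
  have he : 0 < e := lt_min (by positivity) (by norm_num)
  have he' : e ≤ 1 / 2 := min_le_right _ _
  have heε : e ≤ ε / 6 := min_le_left _ _
  obtain ⟨C, hC⟩ := h e he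
  have hC0 : 0 ≤ C := by simpa using (abs_nonneg _).trans (hC 1 le_rfl)
  set K := ∑' n : ℕ, ((n + 1 : ℕ) : ℝ) ^ (-1 - e)
  have hK0 : 0 ≤ K := tsum_nonneg fun n => by positivity
  refine ⟨33 + |zetaCoeff 0| + C * K * 4, fun t ht => ?_⟩
  have ht0 : 0 < |t| := by linarith
  set δ := 1 / (2 * |t|) with hδ_def
  have hδ : 0 < δ := by positivity
  have hδ' : δ ≤ 1 / 2 := by
    rw [hδ_def, div_le_div_iff₀ (by positivity) (by norm_num)]
    linarith
  set s : ℂ := 1 / 2 + δ + t * I with hs_def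
  have hre : s.re = 1 / 2 + δ := by simp [hs_def]
  have him : s.im = t := by simp [hs_def]
  have hs0 : s ≠ 0 := fun h0 => by
    rw [h0, zero_im] at him
    norm_num [← him] at ht
  have hs1 : s ≠ 1 := fun h0 => by
    rw [h0, one_im] at him
    norm_num [← him] at ht
  have hsq : ‖s‖ ^ 2 ≤ 2 * |t| ^ 2 := by
    rw [← Complex.normSq_eq_norm_sq, Complex.normSq_apply, hre, him, sq_abs]
    have : 1 ≤ t ^ 2 := by
      rw [← sq_abs]
      nlinarith
    nlinarith
  have hgap : 1 / (4 * |t| ^ 3) ≤ 1 - ‖(1 - s) / s‖ := by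
    have h1 := norm_one_sub_div_le hδ hre
    have h2 : 1 / (4 * |t| ^ 3) = δ / (2 * |t| ^ 2) := by
      rw [hδ_def]
      field_simp
      norm_num
    have hspos : 0 < ‖s‖ := norm_pos_iff.mpr hs0
    have h3 : δ / (2 * |t| ^ 2) ≤ δ / ‖s‖ ^ 2 := by gcongr
    linarith
  have hgap0 : 0 < 1 / (4 * |t| ^ 3) := by positivity
  have hpow : (1 - ‖(1 - s) / s‖) ^ (-(2 * e)) ≤ 4 * |t| ^ ε := by
    calc _ ≤ (1 / (4 * |t| ^ 3)) ^ (-(2 * e)) :=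
          Real.rpow_le_rpow_of_nonpos hgap0 hgap (by linarith)
      _ = 4 ^ (2 * e) * |t| ^ (6 * e) := by
          rw [one_div, Real.inv_rpow (by positivity), Real.rpow_neg (by positivity), inv_inv,
            Real.mul_rpow (by norm_num) (by positivity), ← Real.rpow_natCast_mul ht0.le]
          congr 2
          push_cast
          ring
      _ ≤ 4 ^ (1 : ℝ) * |t| ^ ε := by
          gcongr
          · norm_num
          · linarith
          · linarith
      _ = 4 * |t| ^ ε := by rw [Real.rpow_one]
  have hmain := norm_riemannZeta₀_sub_le he he' hC (s := s) (by linarith) hs0 hs1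
  have hdiff := norm_riemannZeta_sub_le ht ⟨hδ.le, hδ'⟩
  have hdiff' : 64 * |t| * δ = 32 := by
    rw [hδ_def]
    field_simp
    norm_num
  have hinv : ‖(s - 1)⁻¹‖ ≤ 1 := by
    rw [norm_inv]
    refine inv_le_one_of_one_le₀ ?_
    have := abs_im_le_norm (s - 1)
    rw [sub_im, one_im, sub_zero, him] at this
    linarith
  have htε : 1 ≤ |t| ^ ε := Real.one_le_rpow ht hε.le
  have hdecomp : riemannZeta (1 / 2 + t * I) = (riemannZeta (1 / 2 + t * I) - riemannZeta s) +
      (s - 1)⁻¹ + (zetaCoeff 0 : ℂ) + (riemannZeta₀ s - zetaCoeff 0) := by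
    rw [riemannZeta_eq_inv_sub_add hs1]
    ring
  calc ‖riemannZeta (1 / 2 + t * I)‖
      ≤ ‖riemannZeta (1 / 2 + t * I) - riemannZeta s‖ + ‖(s - 1)⁻¹‖ + ‖(zetaCoeff 0 : ℂ)‖ +
          ‖riemannZeta₀ s - zetaCoeff 0‖ := by
        conv_lhs => rw [hdecomp]
        exact norm_add₄_le
    _ ≤ 32 + 1 + |zetaCoeff 0| + C * K * (4 * |t| ^ ε) := by
        rw [norm_real, Real.norm_eq_abs]
        gcongr
        · exact hdiff.trans_eq hdiff'
        · exact hmain.trans (by gcongr)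
    _ ≤ (33 + |zetaCoeff 0|) * |t| ^ ε + C * K * (4 * |t| ^ ε) := by
        gcongr
        have := abs_nonneg (zetaCoeff 0)
        nlinarith
    _ = _ := by ring
end
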